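/- arXiv:2511.00069 — 2 statements merged into one kernel-verified Lean document; each statement's English description precedes it below -/
import Mathlib

section
/- Let w(y) = (1 + √(1−y))^(−1/2), y(x) = 8x(2x+1)/(4x+1)², v(x) = x(2x+1)(4x+1), and define the probability generating function P(x, z) = w(y(x)·z)/w(y(x)) for x > 0 and z with 0 < z·y(x) < 1. Then P satisfies the first-order partial differential equation v(x)·∂P/∂x − z·∂P/∂z + x·P = 0 at every such (x, z), and P(x, 1) = 1. -/
open Real

noncomputable def w (y : ℝ) : ℝ := (1 + Real.sqrt (1 - y)) ^ (-(1 / 2 : ℝ))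

noncomputable def yFun (x : ℝ) : ℝ := 8 * x * (2 * x + 1) / (4 * x + 1) ^ 2

noncomputable def v (x : ℝ) : ℝ := x * (2 * x + 1) * (4 * x + 1)

noncomputable def P (x z : ℝ) : ℝ := w (yFun x * z) / w (yFun x)

/-!
Write `y` for `yFun`. Since `v * y' = y`, the operator `v ∂/∂x - z ∂/∂z` annihilates every function
of the product `y(x) * z`, in particular the numerator `w (y(x) * z)` of `P`. For `4 * x + 1 > 0`
one has `√(1 - y(x)) = 1 / (4 * x + 1)`, which gives `v * (w ∘ y)' = x * (w ∘ y)` for the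
denominator. The quotient rule combines the two facts.
-/

theorem w_pos (y : ℝ) : 0 < w y :=
  rpow_pos_of_pos (by positivity) _

theorem hasDerivAt_w {y : ℝ} (hy : y < 1) :
    HasDerivAt w (w y / (4 * √(1 - y) * (1 + √(1 - y)))) y := by
  have hsqrt_pos : 0 < √(1 - y) := sqrt_pos.mpr (sub_pos.mpr hy)
  have hbase : HasDerivAt (fun t : ℝ => 1 + √(1 - t)) (-1 / (2 * √(1 - y))) y :=
    (((hasDerivAt_id' y).const_sub 1).sqrt (sub_pos.mpr hy).ne').const_add 1
  have hpow : (1 + √(1 - y)) ^ (-(1 / 2 : ℝ) - 1) = w y / (1 + √(1 - y)) :=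
    rpow_sub_one (by positivity) _
  refine (hbase.rpow_const (p := -(1 / 2 : ℝ)) (.inl (by positivity))).congr_deriv ?_
  rw [hpow]
  field_simp
  ring

section

variable {x : ℝ}

theorem one_sub_yFun (hx : 4 * x + 1 ≠ 0) : 1 - yFun x = (1 / (4 * x + 1)) ^ 2 := by
  rw [yFun, one_div_pow, one_sub_div (pow_ne_zero 2 hx)]
  ring

theorem yFun_lt_one (hx : 4 * x + 1 ≠ 0) : yFun x < 1 := by
  rw [← sub_pos, one_sub_yFun hx]
  positivity

theorem sqrt_one_sub_yFun (hx : 0 < 4 * x + 1) : √(1 - yFun x) = 1 / (4 * x + 1) := by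
  rw [one_sub_yFun hx.ne', sqrt_sq (by positivity)]

theorem hasDerivAt_yFun (hx : 4 * x + 1 ≠ 0) : HasDerivAt yFun (8 / (4 * x + 1) ^ 3) x := by
  have hnum : HasDerivAt (fun t : ℝ => 8 * t * (2 * t + 1)) (32 * x + 8) x :=
    (((hasDerivAt_id' x).const_mul 8).mul
      (((hasDerivAt_id' x).const_mul 2).add_const 1)).congr_deriv (by ring)
  have hden : HasDerivAt (fun t : ℝ => (4 * t + 1) ^ 2) (8 * (4 * x + 1)) x :=
    ((((hasDerivAt_id' x).const_mul 4).add_const 1).fun_pow 2).congr_deriv (by ring)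
  refine (hnum.fun_div hden (pow_ne_zero 2 hx)).congr_deriv ?_
  field_simp
  ring

theorem v_mul_deriv_yFun (hx : 4 * x + 1 ≠ 0) : v x * deriv yFun x = yFun x := by
  rw [(hasDerivAt_yFun hx).deriv, v, yFun]
  field_simp

theorem v_mul_deriv_comp_yFun_mul {f : ℝ → ℝ} {z : ℝ} (hx : 4 * x + 1 ≠ 0)
    (hf : DifferentiableAt ℝ f (yFun x * z)) :
    v x * deriv (fun t => f (yFun t * z)) x = z * deriv (fun t => f (yFun x * t)) z := by
  have hy := (hasDerivAt_yFun hx).differentiableAt.hasDerivAt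
  have hderiv_x : HasDerivAt (fun t => f (yFun t * z)) _ x :=
    hf.hasDerivAt.comp x (hy.mul_const z)
  have hderiv_z : HasDerivAt (fun t => f (yFun x * t)) _ z :=
    hf.hasDerivAt.comp z ((hasDerivAt_id' z).const_mul (yFun x))
  rw [hderiv_x.deriv, hderiv_z.deriv]
  linear_combination deriv f (yFun x * z) * z * v_mul_deriv_yFun hx

theorem hasDerivAt_w_yFun (hx : 0 < 4 * x + 1) :
    HasDerivAt (fun t => w (yFun t)) (w (yFun x) / ((2 * x + 1) * (4 * x + 1))) x := by
  refine ((hasDerivAt_w (yFun_lt_one hx.ne')).comp x (hasDerivAt_yFun hx.ne')).congr_deriv ?_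
  have hsum : 1 + 1 / (4 * x + 1) = 2 * (2 * x + 1) / (4 * x + 1) := by
    field_simp
    ring
  rw [sqrt_one_sub_yFun hx, hsum]
  field_simp
  ring

theorem v_mul_deriv_w_yFun (hx : 0 < 4 * x + 1) :
    v x * deriv (fun t => w (yFun t)) x = x * w (yFun x) := by
  have hx' : 0 < 2 * x + 1 := by linarith
  rw [(hasDerivAt_w_yFun hx).deriv, v, mul_assoc x, mul_assoc x,
    mul_div_cancel₀ _ (mul_pos hx' hx).ne']

end

theorem P_one_right (x : ℝ) : P x 1 = 1 := by
  rw [P, mul_one, div_self (w_pos _).ne']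

theorem pgf_pde_general (x z : ℝ) (hx : 0 < 4 * x + 1) (hz : z * yFun x < 1) :
    DifferentiableAt ℝ (fun t => P t z) x ∧
    DifferentiableAt ℝ (fun t => P x t) z ∧
    v x * deriv (fun t => P t z) x - z * deriv (fun t => P x t) z + x * P x z = 0 ∧
    P x 1 = 1 := by
  have hw : DifferentiableAt ℝ w (yFun x * z) :=
    (hasDerivAt_w (by rwa [mul_comm])).differentiableAt
  have hy : DifferentiableAt ℝ yFun x := (hasDerivAt_yFun hx.ne').differentiableAt
  have hnum_x : DifferentiableAt ℝ (fun t => w (yFun t * z)) x := hw.fun_comp' x (hy.mul_const z)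
  have hnum_z : DifferentiableAt ℝ (fun t => w (yFun x * t)) z :=
    hw.fun_comp' z (differentiableAt_id.const_mul (yFun x))
  have hden : DifferentiableAt ℝ (fun t => w (yFun t)) x :=
    (hasDerivAt_w_yFun hx).differentiableAt
  have hden_ne : w (yFun x) ≠ 0 := (w_pos _).ne'
  refine ⟨hnum_x.fun_div hden hden_ne, hnum_z.div_const _, ?_, P_one_right x⟩
  have hnum_pde := v_mul_deriv_comp_yFun_mul hx.ne' hw
  have hden_pde := v_mul_deriv_w_yFun hx
  simp only [P]
  rw [deriv_fun_div hnum_x hden hden_ne, deriv_div_const]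
  generalize w (yFun x * z) = A
  field_simp
  linear_combination w (yFun x) * hnum_pde - A * hden_pde

theorem pgf_pde (x z : ℝ) (hx : 0 < x) (hz0 : 0 < z * yFun x) (hz1 : z * yFun x < 1) :
    DifferentiableAt ℝ (fun t => P t z) x ∧
    DifferentiableAt ℝ (fun t => P x t) z ∧
    v x * deriv (fun t => P t z) x - z * deriv (fun t => P x t) z + x * P x z = 0 ∧
    P x 1 = 1 :=
  pgf_pde_general x z (by positivity) hz1
end

section
/- Let w(y) = (1 + √(1−y))^(−1/2), y(x) = 8x(2x+1)/(4x+1)², v(x) = x(2x+1)(4x+1), and define the moment generating function A(x, z) = w(y(x)·e^z)/w(y(x)) for x > 0 and real z with y(x)·e^z < 1. Then A satisfies the partial differential equation v(x)·∂A/∂x − ∂A/∂z + x·A = 0 at every such (x, z), and A(x, 0) = 1. -/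
open Real

noncomputable def A (x z : ℝ) : ℝ := w (yFun x * Real.exp z) / w (yFun x)

/-! Since `v * yFun' = yFun`, every function of `yFun x * exp z` is annihilated by `v * ∂ₓ - ∂_z`.
The numerator of `A` has this form, so only the denominator contributes. On the branch
`-1/4 < x` one has `√(1 - yFun x) = 1 / (4 * x + 1)`, whence `v * (w ∘ yFun)' = x * (w ∘ yFun)`,
and dividing by `w (yFun x)` produces exactly the term `-x * A`. -/

section Calculus

variable {F g u W : ℝ → ℝ} {a c x z : ℝ}

theorem mul_deriv_comp_mul_exp (hF : DifferentiableAt ℝ F (g x * exp z))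
    (hg : DifferentiableAt ℝ g x) (hcg : c * deriv g x = g x) :
    c * deriv (fun t => F (g t * exp z)) x = deriv (fun t => F (g x * exp t)) z := by
  have hx : HasDerivAt (fun t => F (g t * exp z))
      (deriv F (g x * exp z) * (deriv g x * exp z)) x :=
    hF.hasDerivAt.comp x (hg.hasDerivAt.mul_const (exp z))
  have hz : HasDerivAt (fun t => F (g x * exp t)) (deriv F (g x * exp z) * (g x * exp z)) z :=
    hF.hasDerivAt.comp z ((hasDerivAt_exp z).const_mul (g x))
  rw [hx.deriv, hz.deriv]
  linear_combination deriv F (g x * exp z) * exp z * hcg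

theorem mul_deriv_div_of_mul_deriv_eq (hu : DifferentiableAt ℝ u x) (hW : DifferentiableAt ℝ W x)
    (hW₀ : W x ≠ 0) (hcW : c * deriv W x = a * W x) :
    c * deriv (fun t => u t / W t) x = c * deriv u x / W x - a * (u x / W x) := by
  rw [deriv_fun_div hu hW hW₀]
  field_simp
  linear_combination -u x * hcW

end Calculus

theorem A_zero_right (x : ℝ) : A x 0 = 1 := by
  rw [A, exp_zero, mul_one, div_self (w_pos _).ne']

theorem mgf_pde_general (x z : ℝ) (hx : -(1 / 4) < x) (hz : yFun x * Real.exp z < 1) :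
    DifferentiableAt ℝ (fun t => A t z) x ∧
    DifferentiableAt ℝ (fun t => A x t) z ∧
    v x * deriv (fun t => A t z) x - deriv (fun t => A x t) z + x * A x z = 0 ∧
    A x 0 = 1 := by
  have hx₄ : 0 < 4 * x + 1 := by linarith
  have hw := (hasDerivAt_w hz).differentiableAt
  have hy := (hasDerivAt_yFun hx₄.ne').differentiableAt
  have hden := (hasDerivAt_w_yFun hx₄).differentiableAt
  have hnum_x : DifferentiableAt ℝ (fun t => w (yFun t * exp z)) x :=
    hw.fun_comp' x (hy.mul_const _)
  have hnum_z : DifferentiableAt ℝ (fun t => w (yFun x * exp t)) z :=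
    hw.fun_comp' z (differentiableAt_exp.const_mul _)
  have htransport := mul_deriv_comp_mul_exp hw hy (v_mul_deriv_yFun hx₄.ne')
  have hAx := mul_deriv_div_of_mul_deriv_eq hnum_x hden (w_pos _).ne' (v_mul_deriv_w_yFun hx₄)
  refine ⟨hnum_x.div hden (w_pos _).ne', hnum_z.div_const _, ?_, A_zero_right x⟩
  simp only [A]
  rw [hAx, htransport, deriv_div_const]
  ring

theorem mgf_pde (x z : ℝ) (hx : 0 < x) (hz : yFun x * Real.exp z < 1) :
    DifferentiableAt ℝ (fun t => A t z) x ∧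
    DifferentiableAt ℝ (fun t => A x t) z ∧
    v x * deriv (fun t => A t z) x - deriv (fun t => A x t) z + x * A x z = 0 ∧
    A x 0 = 1 :=
  mgf_pde_general x z (by linarith) hz
end
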